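/- arXiv:1510.06700 — 8 statements merged into one kernel-verified Lean document; each statement's English description precedes it below -/
import Mathlib

section
/- Let R ⊆ {0,1}^n be closed under the coordinatewise application of the ternary majority operation maj. If a, b ∈ R lie in the same connected component of the solution graph G(R), then d_R(a,b) = |a − b|, the Hamming distance between a and b (no distance expands in a relation closed under majority). -/
/-- Coordinatewise majority operation on `Bool`. -/
def maj (x y z : Bool) : Bool := (x && y) || (y && z) || (z && x)

/-- One step in the solution graph of `R`: both endpoints are solutions and
they differ in exactly one coordinate. -/
def stepR {ι : Type*} [Fintype ι] [DecidableEq ι] (R : Set (ι → Bool))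
    (a b : ι → Bool) : Prop :=
  a ∈ R ∧ b ∈ R ∧ hammingDist a b = 1

/-- `a` and `b` are connected in the solution graph of `R`. -/
def connIn {ι : Type*} [Fintype ι] [DecidableEq ι] (R : Set (ι → Bool)) :
    (ι → Bool) → (ι → Bool) → Prop :=
  Relation.ReflTransGen (stepR R)

/-- There is a path of length `k` from `a` to `b` in the solution graph of `R`. -/
def hasPathLen {ι : Type*} [Fintype ι] [DecidableEq ι] (R : Set (ι → Bool)) :
    ℕ → (ι → Bool) → (ι → Bool) → Prop
  | 0, a, b => a = b
  | k + 1, a, b => ∃ c, stepR R a c ∧ hasPathLen R k c b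

/-- Shortest-path distance in the solution graph of `R`. -/
noncomputable def distIn {ι : Type*} [Fintype ι] [DecidableEq ι] (R : Set (ι → Bool))
    (a b : ι → Bool) : ℕ :=
  sInf {k | hasPathLen R k a b}

/-! For `a, b ∈ R` the map `u ↦ maj(a, u, b)` sends `R` into itself, does not increase Hamming
distances and fixes `a` and `b`; its values lie on the Hamming interval between `a` and `b`. It thus
retracts a path from `a` to `b` in `G(R)` to one inside that interval, and the first genuine step of
the retracted path approaches `b`. Repeating this yields a path of length `|a - b|`,
and by the triangle inequality no path is shorter. -/

theorem maj_self_left (x y : Bool) : maj x x y = x := by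
  cases x <;> cases y <;> rfl

theorem maj_self_right (x y : Bool) : maj x y y = y := by
  cases x <;> cases y <;> rfl

section Hamming

variable {ι : Type*} [Fintype ι]

/-- The Hamming interval between `a` and `b`: the vectors lying on a geodesic of the Hamming metric
from `a` to `b`. -/
def hammingInterval {β : ι → Type*} [∀ i, DecidableEq (β i)] (a b : ∀ i, β i) : Set (∀ i, β i) :=
  {c | hammingDist a c + hammingDist c b = hammingDist a b}

theorem maj_mem_hammingInterval (a u b : ι → Bool) :
    (fun i => maj (a i) (u i) (b i)) ∈ hammingInterval a b := by
  have additive_at (x y z : Bool) : (if x ≠ maj x y z then 1 else 0) +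
      (if maj x y z ≠ z then 1 else 0) = if x ≠ z then 1 else 0 := by
    cases x <;> cases y <;> cases z <;> rfl
  simp only [hammingInterval, Set.mem_ofPred_eq, hammingDist, Finset.card_filter,
    ← Finset.sum_add_distrib, additive_at]

end Hamming

section SolutionGraph

variable {ι : Type*} [Fintype ι] [DecidableEq ι] {R : Set (ι → Bool)} {a b : ι → Bool}

theorem connIn.eq_or_mem (h : connIn R a b) : a = b ∨ a ∈ R ∧ b ∈ R := by
  rcases h.cases_head with hab | ⟨_, hac, -⟩
  · exact .inl hab
  rcases h.cases_tail with hba | ⟨_, -, hdb⟩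
  · exact .inl hba.symm
  exact .inr ⟨hac.1, hdb.2.1⟩

theorem connIn.map {κ : Type*} [Fintype κ] [DecidableEq κ] {S : Set (κ → Bool)}
    {f : (ι → Bool) → κ → Bool} (hRS : Set.MapsTo f R S)
    (hf : ∀ u v, hammingDist (f u) (f v) ≤ hammingDist u v) (h : connIn R a b) :
    connIn S (f a) (f b) := by
  refine Relation.ReflTransGen.lift' f (fun u v ⟨hu, hv, huv⟩ => ?_) a b h
  change connIn S (f u) (f v)
  rcases Nat.le_one_iff_eq_zero_or_eq_one.mp (huv ▸ hf u v) with hzero | hone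
  · rw [hammingDist_eq_zero.mp hzero]
    exact Relation.ReflTransGen.refl
  · exact Relation.ReflTransGen.single ⟨hRS hu, hRS hv, hone⟩

theorem connIn.mono {S : Set (ι → Bool)} (hRS : R ⊆ S) (h : connIn R a b) : connIn S a b :=
  h.map (f := id) hRS fun _ _ => le_rfl

theorem connIn.inter_hammingInterval
    (hmaj : ∀ a ∈ R, ∀ b ∈ R, ∀ c ∈ R, (fun i => maj (a i) (b i) (c i)) ∈ R)
    (ha : a ∈ R) (hb : b ∈ R) (h : connIn R a b) : connIn (R ∩ hammingInterval a b) a b := by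
  have hmaps : Set.MapsTo (fun u i => maj (a i) (u i) (b i)) R (R ∩ hammingInterval a b) :=
    fun u hu => ⟨hmaj a ha u hu b hb, maj_mem_hammingInterval a u b⟩
  simpa only [maj_self_left, maj_self_right] using
    h.map hmaps fun u v => hammingDist_comp_le_hammingDist fun i x => maj (a i) x (b i)

theorem connIn.exists_step_hammingDist_eq_add_one
    (hmaj : ∀ a ∈ R, ∀ b ∈ R, ∀ c ∈ R, (fun i => maj (a i) (b i) (c i)) ∈ R)
    (h : connIn R a b) (hne : a ≠ b) :
    ∃ c, stepR R a c ∧ connIn R c b ∧ hammingDist a b = hammingDist c b + 1 := by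
  obtain ⟨ha, hb⟩ := h.eq_or_mem.resolve_left hne
  obtain ⟨c, ⟨-, ⟨hcR, hc⟩, hac⟩, hcb⟩ :=
    (h.inter_hammingInterval hmaj ha hb).cases_head.resolve_left hne
  refine ⟨c, ⟨ha, hcR, hac⟩, connIn.mono Set.inter_subset_left hcb, ?_⟩
  rw [← hc, hac, add_comm]

theorem connIn.hasPathLen_hammingDist
    (hmaj : ∀ a ∈ R, ∀ b ∈ R, ∀ c ∈ R, (fun i => maj (a i) (b i) (c i)) ∈ R)
    (h : connIn R a b) : hasPathLen R (hammingDist a b) a b := by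
  induction hk : hammingDist a b generalizing a with
  | zero => exact hammingDist_eq_zero.mp hk
  | succ k ih =>
    have hne : a ≠ b := hammingDist_ne_zero.mp (hk ▸ k.succ_ne_zero)
    obtain ⟨c, hac, hcb, hdist⟩ := h.exists_step_hammingDist_eq_add_one hmaj hne
    exact ⟨c, hac, ih hcb (Nat.succ.inj (hdist.symm.trans hk))⟩

theorem hasPathLen.hammingDist_le {k : ℕ} (h : hasPathLen R k a b) : hammingDist a b ≤ k := by
  induction k generalizing a with
  | zero => exact (hammingDist_eq_zero.mpr h).le
  | succ k ih =>
    obtain ⟨c, ⟨-, -, hac⟩, hcb⟩ := h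
    calc hammingDist a b ≤ hammingDist a c + hammingDist c b := hammingDist_triangle a c b
      _ ≤ 1 + k := Nat.add_le_add hac.le (ih hcb)
      _ = k + 1 := add_comm 1 k

theorem stmt0_general
    (hmaj : ∀ a ∈ R, ∀ b ∈ R, ∀ c ∈ R, (fun i => maj (a i) (b i) (c i)) ∈ R)
    (h : connIn R a b) : distIn R a b = hammingDist a b :=
  IsLeast.csInf_eq ⟨h.hasPathLen_hammingDist hmaj, fun _ => hasPathLen.hammingDist_le⟩

end SolutionGraph

/-- If `R ⊆ {0,1}^n` is closed under coordinatewise majority, then no distance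
expands: for `a, b ∈ R` in the same connected component of `G(R)`,
`d_R(a,b)` equals the Hamming distance `|a - b|`. -/
theorem stmt0 {n : ℕ} (R : Set (Fin n → Bool))
    (hmaj : ∀ a ∈ R, ∀ b ∈ R, ∀ c ∈ R, (fun i => maj (a i) (b i) (c i)) ∈ R)
    (a b : Fin n → Bool) (ha : a ∈ R) (hb : b ∈ R)
    (hconn : connIn R a b) :
    distIn R a b = hammingDist a b :=
  stmt0_general hmaj hconn
end

section
/- Let F ⊆ {0,1}^n be defined by a constraint family ((V_j, Q_j))_{j∈J} in which every constraint relation Q_j is OR-free. Then every connected component C of the solution graph G(F) contains a minimum solution m, i.e. m ∈ C and m ≤ a coordinatewise for every a ∈ C; moreover, every a ∈ C is connected to m via a monotone path, i.e. there is a path m = u⁰, u¹, …, uʳ = a in G(F) with u⁰ ≤ u¹ ≤ ⋯ ≤ uʳ. -/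
/-- The relation on `{0,1}^n` defined by a constraint family `((V j, Q j))_j`. -/
def famSet {n : ℕ} {J : Type*} (V : J → Finset (Fin n))
    (Q : ∀ j, Set ({i // i ∈ V j} → Bool)) : Set (Fin n → Bool) :=
  {a | ∀ j, (fun i : {i // i ∈ V j} => a i.1) ∈ Q j}

/-- `Q` is OR-free: the binary relation OR = {01, 10, 11} cannot be obtained
from `Q` by substituting constants at all remaining coordinates. -/
def orFree {ι : Type*} [DecidableEq ι] (Q : Set (ι → Bool)) : Prop :=
  ¬ ∃ (i j : ι) (t : ι → Bool), i ≠ j ∧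
      ∀ x y : Bool,
        (Function.update (Function.update t i x) j y ∈ Q ↔ (x || y) = true)

/-- Connectivity via a monotone (coordinatewise increasing) path. -/
def monoConn {ι : Type*} [Fintype ι] [DecidableEq ι] (R : Set (ι → Bool)) :
    (ι → Bool) → (ι → Bool) → Prop :=
  Relation.ReflTransGen (fun x y => stepR R x y ∧ x ≤ y)

/-
Say that a solution steps down to another when it becomes the latter by changing a single `true`
to `false`. OR-freeness says precisely that whenever two coordinates of a solution can be lowered
separately, they can be lowered together; this property passes to solution sets of conjunctions,
and it makes descent confluent. Every edge of the solution graph is a descent in one of its two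
directions, so any two connected solutions descend to a common one. A solution which is minimal
among those reachable by descent from `a` admits no further descent, and is therefore reached by
descent from every solution connected to `a`.
-/

open Function Relation

section HammingDist

variable {ι : Type*} {β : ι → Type*} [Fintype ι] {x y : ∀ i, β i}

theorem hammingDist_eq_one_iff_exists_update [DecidableEq ι] [∀ i, DecidableEq (β i)] :
    hammingDist x y = 1 ↔ ∃ i, ∃ b ≠ x i, y = update x i b := by
  constructor
  · intro h
    obtain ⟨i, hi⟩ := Finset.card_eq_one.1 h
    have hdiff : ∀ k, x k ≠ y k ↔ k = i := by simpa [Finset.ext_iff] using hi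
    refine ⟨i, y i, ((hdiff i).2 rfl).symm, eq_update_iff.2 ⟨rfl, fun k hk => ?_⟩⟩
    exact (not_ne_iff.1 (mt (hdiff k).1 hk)).symm
  · rintro ⟨i, b, hb, rfl⟩
    refine Finset.card_eq_one.2 ⟨i, ?_⟩
    ext k
    rcases eq_or_ne k i with rfl | hk
    · simpa using hb.symm
    · simp [hk]

theorem le_or_ge_of_hammingDist_eq_one [∀ i, LinearOrder (β i)] (h : hammingDist x y = 1) :
    x ≤ y ∨ y ≤ x := by
  classical
  obtain ⟨i, b, -, rfl⟩ := hammingDist_eq_one_iff_exists_update.1 h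
  rw [le_update_self_iff, update_le_self_iff]
  exact le_total _ _

end HammingDist

section OrFree

variable {ι κ : Type*} [DecidableEq ι] [DecidableEq κ]

theorem orFree_iff_update_false_mem {Q : Set (ι → Bool)} :
    orFree Q ↔ ∀ t ∈ Q, ∀ i k, update t i false ∈ Q → update t k false ∈ Q →
      update (update t i false) k false ∈ Q := by
  constructor
  · intro hQ t ht i k hi hk
    by_contra hik
    have update_false_eq {s : ι → Bool} {l : ι} (h : s l ≠ true) : update s l false = s := by
      simpa using h
    have hne : i ≠ k := by
      rintro rfl
      exact hik (by simpa using hi)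
    have hti : update t i true = t := by
      rw [update_eq_self_iff, eq_comm]
      by_contra hi_ne
      exact hik (by rwa [update_false_eq hi_ne])
    have htk : update t k true = t := by
      rw [update_eq_self_iff, eq_comm]
      by_contra hk_ne
      have hk_ne' : update t i false k ≠ true := by rwa [update_of_ne hne.symm]
      exact hik (by rwa [update_false_eq hk_ne'])
    refine hQ ⟨i, k, t, hne, ?_⟩
    rintro (_ | _) (_ | _)
    · simpa using hik
    · simpa [update_comm hne, htk] using hi
    · simpa [hti] using hk
    · simpa [hti, htk] using ht
  · rintro hQ ⟨i, k, t, hik, hOR⟩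
    have h11 := (hOR true true).2 rfl
    have h01 := (hOR false true).2 rfl
    have h10 := (hOR true false).2 rfl
    have h00 := hQ _ h11 i k (by simpa [update_comm hik] using h01) (by simpa using h10)
    have hmem : update (update t i false) k false ∈ Q := by
      simpa [update_comm hik] using h00
    exact Bool.false_ne_true ((hOR false false).1 hmem)

theorem orFree_iInter {J : Sort*} {R : J → Set (ι → Bool)} (hR : ∀ j, orFree (R j)) :
    orFree (⋂ j, R j) := by
  simp only [orFree_iff_update_false_mem, Set.mem_iInter] at hR ⊢
  exact fun t ht i k hi hk j => hR j t (ht j) i k (hi j) (hk j)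

theorem orFree.preimage_comp {Q : Set (κ → Bool)} (hQ : orFree Q) {f : κ → ι}
    (hf : Injective f) : orFree ((· ∘ f) ⁻¹' Q) := by
  rw [orFree_iff_update_false_mem] at hQ ⊢
  simp only [Set.mem_preimage]
  intro t ht i k hi hk
  by_cases hkf : k ∈ Set.range f
  · obtain ⟨k, rfl⟩ := hkf
    by_cases hif : i ∈ Set.range f
    · obtain ⟨i, rfl⟩ := hif
      simp only [update_comp_eq_of_injective _ hf] at hi hk ⊢
      exact hQ _ ht i k hi hk
    · rw [update_comp_eq_of_injective _ hf] at hk ⊢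
      rwa [update_comp_eq_of_notMem_range _ _ hif]
  · rwa [update_comp_eq_of_notMem_range _ _ hkf]

theorem orFree_famSet {n : ℕ} {J : Type*} {V : J → Finset (Fin n)}
    {Q : ∀ j, Set ({i // i ∈ V j} → Bool)} (hQ : ∀ j, orFree (Q j)) : orFree (famSet V Q) := by
  have hInter : famSet V Q = ⋂ j, (· ∘ Subtype.val) ⁻¹' Q j := by
    ext a
    simp only [Set.mem_iInter]
    rfl
  rw [hInter]
  exact orFree_iInter fun j => (hQ j).preimage_comp Subtype.val_injective

end OrFree

section SolutionGraph

variable {ι : Type*} [Fintype ι] [DecidableEq ι] {R : Set (ι → Bool)} {x y z : ι → Bool}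

theorem stepR.symm (h : stepR R x y) : stepR R y x :=
  ⟨h.2.1, h.1, hammingDist_comm x y ▸ h.2.2⟩

theorem connIn.mem_left (h : connIn R x y) (hy : y ∈ R) : x ∈ R := by
  rcases h.cases_head with rfl | ⟨_, hstep, -⟩
  · exact hy
  · exact hstep.1

theorem monoConn.connIn (h : monoConn R x y) : connIn R x y :=
  ReflTransGen.mono (fun _ _ hstep => hstep.1) _ _ h

/-- A descending edge of the solution graph, lowering one coordinate of `x` to reach `y`. It is
oriented against the steps of `monoConn`, so that components are studied by rewriting towards their
minimum. -/
def downStep (R : Set (ι → Bool)) (x y : ι → Bool) : Prop :=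
  stepR R y x ∧ y ≤ x

theorem reflTransGen_downStep_iff_monoConn :
    ReflTransGen (downStep R) x y ↔ monoConn R y x :=
  reflTransGen_swap

theorem monoConn.le (h : monoConn R x y) : x ≤ y :=
  reflTransGen_le_of_le (r := (· ≤ ·)) (fun _ _ hstep => hstep.2) _ _ h

theorem downStep.exists_eq_update_false (h : downStep R x y) : ∃ i, y = update x i false := by
  obtain ⟨i, b, hb, rfl⟩ := hammingDist_eq_one_iff_exists_update.1 h.1.symm.2.2
  have hlt : b < x i := (update_le_self_iff.1 h.2).lt_of_ne hb
  exact ⟨i, by rw [(Bool.lt_iff.1 hlt).1]⟩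

theorem reflGen_downStep_update_false {i : ι} (hx : x ∈ R) (hy : update x i false ∈ R) :
    ReflGen (downStep R) x (update x i false) := by
  cases hxi : x i with
  | false => rw [← hxi, update_eq_self]
  | true =>
    have hdist : hammingDist x (update x i false) = 1 :=
      hammingDist_eq_one_iff_exists_update.2 ⟨i, false, by simp [hxi], rfl⟩
    exact .single ⟨stepR.symm ⟨hx, hy, hdist⟩, update_le_self_iff.2 (Bool.false_le _)⟩

theorem orFree.downStep_diamond (hR : orFree R) (hy : downStep R x y) (hz : downStep R x z) :
    ∃ d, ReflGen (downStep R) y d ∧ ReflGen (downStep R) z d := by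
  have hyR : y ∈ R := hy.1.1
  have hzR : z ∈ R := hz.1.1
  obtain ⟨i, rfl⟩ := hy.exists_eq_update_false
  obtain ⟨k, rfl⟩ := hz.exists_eq_update_false
  have hd : update (update x i false) k false ∈ R :=
    orFree_iff_update_false_mem.1 hR x hy.1.2.1 i k hyR hzR
  have hcomm : update (update x i false) k false = update (update x k false) i false := by
    rcases eq_or_ne i k with rfl | hik
    · rfl
    · exact update_comm hik _ _ _
  exact ⟨_, reflGen_downStep_update_false hyR hd,
    hcomm ▸ reflGen_downStep_update_false hzR (hcomm ▸ hd)⟩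

theorem orFree.equivalence_join_downStep (hR : orFree R) :
    Equivalence (Join (ReflTransGen (downStep R))) :=
  equivalence_join_reflTransGen fun _ _ _ hy hz =>
    let ⟨d, hyd, hzd⟩ := hR.downStep_diamond hy hz
    ⟨d, hyd, hzd.to_reflTransGen⟩

theorem stepR.join_downStep (h : stepR R x y) : Join (ReflTransGen (downStep R)) x y := by
  rcases le_or_ge_of_hammingDist_eq_one h.2.2 with hle | hle
  · exact ⟨x, .refl, .single ⟨h, hle⟩⟩
  · exact ⟨y, .single ⟨h.symm, hle⟩, .refl⟩

theorem orFree.exists_monoConn_of_connIn (hR : orFree R) (h : connIn R x y) :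
    ∃ d, monoConn R d x ∧ monoConn R d y := by
  simp only [← reflTransGen_downStep_iff_monoConn]
  exact reflTransGen_le_of_equivalence_of_le hR.equivalence_join_downStep
    (fun _ _ => stepR.join_downStep) x y h

theorem exists_monoConn_forall_eq (R : Set (ι → Bool)) (x : ι → Bool) :
    ∃ m, monoConn R m x ∧ ∀ d, monoConn R d m → d = m := by
  obtain ⟨m, hm⟩ := (Set.toFinite {m | monoConn R m x}).exists_minimal ⟨x, .refl⟩
  exact ⟨m, hm.prop, fun d hd => hm.eq_of_le (hd.trans hm.prop) hd.le⟩

end SolutionGraph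

theorem stmt2_general {ι : Type*} [Fintype ι] [DecidableEq ι] {R : Set (ι → Bool)}
    (hR : orFree R) :
    ∀ a ∈ R, ∃ m, m ∈ R ∧ connIn R m a ∧
      (∀ b ∈ R, connIn R a b → m ≤ b) ∧
      (∀ b ∈ R, connIn R a b → monoConn R m b) := by
  intro a ha
  obtain ⟨m, hma, hmin⟩ := exists_monoConn_forall_eq R a
  have hmono : ∀ b, connIn R a b → monoConn R m b := by
    intro b hab
    obtain ⟨d, hdm, hdb⟩ := hR.exists_monoConn_of_connIn (hma.connIn.trans hab)
    rwa [← hmin d hdm]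
  exact ⟨m, hma.connIn.mem_left ha, hma.connIn,
    fun b _ hab => (hmono b hab).le, fun b _ hab => hmono b hab⟩

/-- If every constraint relation is OR-free, every connected component of the
solution graph of the defined relation contains a coordinatewise minimum
solution, and every solution of the component is connected to it via a
monotone path. -/
theorem stmt2 {n : ℕ} {J : Type*} [Fintype J]
    (V : J → Finset (Fin n)) (Q : ∀ j, Set ({i // i ∈ V j} → Bool))
    (hQ : ∀ j, orFree (Q j)) :
    ∀ a ∈ famSet V Q, ∃ m, m ∈ famSet V Q ∧ connIn (famSet V Q) m a ∧
      (∀ b ∈ famSet V Q, connIn (famSet V Q) a b → m ≤ b) ∧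
      (∀ b ∈ famSet V Q, connIn (famSet V Q) a b → monoConn (famSet V Q) m b) :=
  stmt2_general (orFree_famSet hQ)
end

section
/- Let R ⊆ {0,1}^n be closed under coordinatewise conjunction ∧ and contain the all-zero vector (the solution set of a Horn formula without positive unit clauses). Then the solution graph G(R) is disconnected if and only if R contains a locally minimal nonzero solution, i.e. some a ∈ R with a ≠ (0,…,0) such that for every coordinate i with a_i = 1, the vector obtained from a by flipping coordinate i to 0 is not in R. -/
/-!
Deleting ones one at a time as long as this stays inside `R` joins every solution to a locally
minimal one. Conversely, if `R` is closed under meets and `a` is locally minimal, then no path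
starting at `a` leaves the set of vectors above `a`: the first step `b → c` to do so would flip
some coordinate `i` with `a i = 1` to `0`, and then `a ⊓ c ∈ R` would be `a` with its `i`-th
coordinate flipped to `0`. Hence the least element of `R` is the only locally minimal solution in
its component, and `G(R)` is connected iff there is no other one.
-/

open Function

theorem hammingDist_eq_one_iff {ι : Type*} [Fintype ι] [DecidableEq ι] {β : ι → Type*}
    [∀ i, DecidableEq (β i)] {x y : ∀ i, β i} :
    hammingDist x y = 1 ↔ ∃ i v, v ≠ x i ∧ update x i v = y := by
  constructor
  · intro h
    obtain ⟨i, hi⟩ := Finset.card_eq_one.mp h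
    have differ_iff (j : ι) : x j ≠ y j ↔ j = i := by
      simpa using Finset.ext_iff.mp hi j
    exact ⟨i, y i, ((differ_iff i).mpr rfl).symm, update_eq_iff.mpr
      ⟨rfl, fun j hj => not_not.mp (mt (differ_iff j).mp hj)⟩⟩
  · rintro ⟨i, v, hv, rfl⟩
    refine Finset.card_eq_one.mpr ⟨i, Finset.ext fun j => ?_⟩
    rcases eq_or_ne j i with rfl | hj
    · simpa using hv.symm
    · simp [hj]

theorem inf_update_eq_update {ι : Type*} [DecidableEq ι] {α : ι → Type*}
    [∀ i, SemilatticeInf (α i)] {a b : ∀ i, α i} {i : ι} {v : α i} (hab : a ≤ b) (hv : v ≤ a i) :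
    a ⊓ update b i v = update a i v := by
  ext j
  rcases eq_or_ne j i with rfl | hj
  · simpa using hv
  · simpa [hj] using hab j

section SolutionGraph

variable {ι : Type*} [DecidableEq ι] {R : Set (ι → Bool)} {a b c m : ι → Bool}

/-- The locally minimal solutions of `R`: the members of `R` that leave `R` whenever a single
coordinate is flipped from `1` to `0`. The zero vector, if a solution, counts as locally minimal. -/
def IsLocallyMinimal (R : Set (ι → Bool)) (a : ι → Bool) : Prop :=
  a ∈ R ∧ ∀ i, a i = true → update a i false ∉ R

variable [Fintype ι]

instance stepR.instSymm : Std.Symm (stepR R) where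
  symm a b h := ⟨h.2.1, h.1, hammingDist_comm a b ▸ h.2.2⟩

theorem stepR_update_false {i : ι} (ha : a ∈ R) (hi : a i = true) (hu : update a i false ∈ R) :
    stepR R a (update a i false) :=
  ⟨ha, hu, hammingDist_eq_one_iff.mpr ⟨i, false, by simp [hi], rfl⟩⟩

theorem exists_isLocallyMinimal_connIn (ha : a ∈ R) : ∃ b, IsLocallyMinimal R b ∧ connIn R a b := by
  induction a using WellFoundedLT.induction with
  | _ a ih =>
    by_cases hmin : ∀ i, a i = true → update a i false ∉ R
    · exact ⟨a, ⟨ha, hmin⟩, .refl⟩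
    · push Not at hmin
      obtain ⟨i, hi, hu⟩ := hmin
      have hlt : update a i false < a := update_lt_self_iff.mpr (by simp [hi])
      obtain ⟨b, hb, hconn⟩ := ih _ hlt hu
      exact ⟨b, hb, .head (stepR_update_false ha hi hu) hconn⟩

theorem IsLocallyMinimal.le_of_stepR (ha : IsLocallyMinimal R a) (hR : InfClosed R) (hab : a ≤ b)
    (hbc : stepR R b c) : a ≤ c := by
  obtain ⟨-, hc, hdist⟩ := hbc
  obtain ⟨i, v, -, rfl⟩ := hammingDist_eq_one_iff.mp hdist
  suffices hv : a i ≤ v from le_update_iff.mpr ⟨hv, fun j _ => hab j⟩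
  by_contra hv
  obtain ⟨rfl, hi⟩ : v = false ∧ a i = true := Bool.lt_iff.mp (not_le.mp hv)
  have hmem : update a i false ∈ R := inf_update_eq_update hab (Bool.false_le _) ▸ hR ha.1 hc
  exact ha.2 i hi hmem

theorem IsLocallyMinimal.le_of_connIn (ha : IsLocallyMinimal R a) (hR : InfClosed R)
    (hab : connIn R a b) : a ≤ b := by
  induction hab with
  | refl => exact le_rfl
  | tail _ hbc hab => exact ha.le_of_stepR hR hab hbc

theorem stmt4_general (hR : InfClosed R) (hm : IsLeast R m) :
    (∃ a ∈ R, ∃ b ∈ R, ¬ connIn R a b) ↔ ∃ a, a ≠ m ∧ IsLocallyMinimal R a := by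
  constructor
  · rintro ⟨a, ha, b, hb, hab⟩
    by_contra! hunique
    have conn_least {c : ι → Bool} (hc : c ∈ R) : connIn R c m := by
      obtain ⟨d, hd, hcd⟩ := exists_isLocallyMinimal_connIn hc
      have hdm : d = m := of_not_not fun hne => hunique d hne hd
      exact hdm ▸ hcd
    exact hab ((conn_least ha).trans (symm_of (Relation.ReflTransGen (stepR R)) (conn_least hb)))
  · rintro ⟨a, hne, ha⟩
    exact ⟨a, ha.1, m, hm.1, fun ham => hne ((ha.le_of_connIn hR ham).antisymm (hm.2 ha.1))⟩

end SolutionGraph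

/-- For `R` closed under coordinatewise conjunction and containing the
all-zero vector (a Horn relation without positive unit clauses), the solution
graph `G(R)` is disconnected iff `R` has a locally minimal nonzero solution. -/
theorem stmt4 {n : ℕ} (R : Set (Fin n → Bool))
    (hand : ∀ a ∈ R, ∀ b ∈ R, (fun i => a i && b i) ∈ R)
    (h0 : (fun _ => false) ∈ R) :
    (∃ a ∈ R, ∃ b ∈ R, ¬ connIn R a b) ↔
      (∃ a ∈ R, a ≠ (fun _ => false) ∧
        ∀ i, a i = true → Function.update a i false ∉ R) := by
  have hleast : IsLeast R (fun _ => false) := ⟨h0, fun _ _ _ => Bool.false_le _⟩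
  simpa only [IsLocallyMinimal, and_left_comm] using
    stmt4_general (fun a ha b hb => hand a ha b hb) hleast
end

section
/- Let R ⊆ {0,1}^n be closed under coordinatewise conjunction ∧. Let u and v be elements of two distinct connected components of the solution graph G(R), each of which is the minimum of its component with respect to the coordinatewise order (u ≤ a for every a in the component of u, and v ≤ b for every b in the component of v). If u ≤ v coordinatewise and u ≠ v, then no vector a in the connected component of u satisfies v ≤ a. -/
/-! Meeting with `v` does not increase Hamming distances, so it carries the path from `u` to `a`
to a (possibly shorter) path in `G(R)`. If `u ≤ v ≤ a`, the new path runs from `u ⊓ v = u` to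
`a ⊓ v = v`, so `u` and `v` lie in the same component. -/

namespace connIn

variable {ι κ : Type*} [Fintype ι] [DecidableEq ι] [Fintype κ] [DecidableEq κ]
  {R : Set (ι → Bool)} {S : Set (κ → Bool)} {a b v : ι → Bool}

theorem of_hammingDist_le_one (ha : a ∈ R) (hb : b ∈ R) (hab : hammingDist a b ≤ 1) :
    connIn R a b := by
  rcases Nat.le_one_iff_eq_zero_or_eq_one.mp hab with h | h
  · rw [hammingDist_eq_zero.mp h]
    exact .refl
  · exact .single ⟨ha, hb, h⟩

theorem map_s5 {f : (ι → Bool) → κ → Bool} (hf : Set.MapsTo f R S)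
    (hdist : ∀ x y, hammingDist (f x) (f y) ≤ hammingDist x y) (hab : connIn R a b) :
    connIn S (f a) (f b) :=
  Relation.ReflTransGen.lift' f
    (fun x y ⟨hx, hy, hxy⟩ => of_hammingDist_le_one (hf hx) (hf hy) (hxy ▸ hdist x y)) a b hab

theorem inf_right (hv : Set.MapsTo (· ⊓ v) R R) (hab : connIn R a b) :
    connIn R (a ⊓ v) (b ⊓ v) :=
  hab.map_s5 hv fun _ _ => hammingDist_comp_le_hammingDist fun i => (· ⊓ v i)

end connIn

theorem stmt5_general {ι : Type*} [Fintype ι] [DecidableEq ι] {R : Set (ι → Bool)}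
    {u v : ι → Bool} (hv : Set.MapsTo (· ⊓ v) R R) (hdistinct : ¬ connIn R u v) (huv : u ≤ v) :
    ∀ a, connIn R u a → ¬ v ≤ a := by
  intro a hua hva
  have h : connIn R (u ⊓ v) (a ⊓ v) := hua.inf_right hv
  rw [inf_eq_left.mpr huv, inf_eq_right.mpr hva] at h
  exact hdistinct h

/-- Let `R` be closed under coordinatewise conjunction, and let `u`, `v` be
the coordinatewise minimum solutions of two distinct connected components of
`G(R)`. If `u ≤ v` and `u ≠ v`, then no vector in the component of `u`
dominates `v`. -/
theorem stmt5 {n : ℕ} (R : Set (Fin n → Bool))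
    (hand : ∀ a ∈ R, ∀ b ∈ R, (fun i => a i && b i) ∈ R)
    (u v : Fin n → Bool) (hu : u ∈ R) (hv : v ∈ R)
    (hdistinct : ¬ connIn R u v)
    (humin : ∀ a ∈ R, connIn R u a → u ≤ a)
    (hvmin : ∀ b ∈ R, connIn R v b → v ≤ b)
    (huv : u ≤ v) (hne : u ≠ v) :
    ∀ a ∈ R, connIn R u a → ¬ v ≤ a :=
  fun a _ => stmt5_general (fun x hx => hand x hx v hv) hdistinct huv a
end

section
/- Let R ⊆ {0,1}^n be closed under the coordinatewise application of the ternary operation (x,y,z) ↦ x⊕y⊕z (R is affine). Then for every a ∈ R, the connected component of a in the solution graph G(R) is exactly the subcube {b ∈ {0,1}^n | b_i = a_i for every i ∉ D}, where D = {i | the vector obtained from a by flipping coordinate i belongs to R}. In particular, every connected component of G(R) induces a hypercube and is closed under coordinatewise maj. -/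
/-!
If `b` and its flip `b'` at `i` both lie in an affine relation `R`, then so does `b ⊕ b' ⊕ c` for
every `c ∈ R`, which is the flip of `c` at `i`. So the set `D` of coordinates that can be flipped
inside `R` is the same at every solution: a path from `a` never changes a coordinate outside `D`,
and `a` can be turned into any vector agreeing with it outside `D` by flipping the differing
coordinates one by one, in any order.
-/

theorem maj_self (x : Bool) : maj x x x = x := by
  cases x <;> rfl

section Subcube

variable {ι : Type*}

/-- An affine relation: one closed under the coordinatewise operation `x ⊕ y ⊕ z`. -/
def IsAffineRelation (R : Set (ι → Bool)) : Prop :=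
  ∀ a ∈ R, ∀ b ∈ R, ∀ c ∈ R, (fun i => xor (xor (a i) (b i)) (c i)) ∈ R

/-- The subcube through `a` with free coordinates `D`; all other coordinates are fixed by `a`. -/
def subcube (a : ι → Bool) (D : Set ι) : Set (ι → Bool) :=
  {b | ∀ i, i ∉ D → b i = a i}

theorem apply_mem_subcube {f : Bool → Bool → Bool → Bool} (hf : ∀ x, f x x x = x)
    {a b c d : ι → Bool} {D : Set ι} (hb : b ∈ subcube a D) (hc : c ∈ subcube a D)
    (hd : d ∈ subcube a D) : (fun i => f (b i) (c i) (d i)) ∈ subcube a D := fun i hi =>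
  calc f (b i) (c i) (d i) = f (a i) (a i) (a i) := by rw [hb i hi, hc i hi, hd i hi]
    _ = a i := hf (a i)

end Subcube

section Flip

variable {ι : Type*} [DecidableEq ι]

/-- The vector `a` with its coordinate `i` flipped: the neighbour of `a` in direction `i` in the
hypercube. -/
def flipCoord (a : ι → Bool) (i : ι) : ι → Bool :=
  Function.update a i (!a i)

/-- The directions in which the neighbour of `a` in the hypercube lies in `R`; this is the set `D`
of the theorem. -/
def flipDirections (R : Set (ι → Bool)) (a : ι → Bool) : Set ι :=
  {i | flipCoord a i ∈ R}

theorem eq_flipCoord_iff {a b : ι → Bool} {i : ι} :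
    b = flipCoord a i ↔ ∀ j, a j ≠ b j ↔ j = i := by
  rw [flipCoord, Function.eq_update_iff, Bool.eq_not]
  constructor
  · rintro ⟨hi, hne⟩ j
    exact ⟨fun hj => by_contra fun hji => hj (hne j hji).symm, fun hj => hj ▸ hi.symm⟩
  · intro h
    exact ⟨((h i).2 rfl).symm, fun j hj => (not_ne_iff.1 (mt (h j).1 hj)).symm⟩

theorem flipCoord_mem_subcube {a b : ι → Bool} {D : Set ι} {i : ι} (hb : b ∈ subcube a D)
    (hi : i ∈ D) : flipCoord b i ∈ subcube a D := by
  intro j hj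
  have hji : j ≠ i := fun h => hj (h ▸ hi)
  rw [flipCoord, Function.update_of_ne hji, hb j hj]

theorem xor_flipCoord_xor (a b : ι → Bool) (i : ι) :
    (fun j => xor (xor (a j) (flipCoord a i j)) (b j)) = flipCoord b i := by
  funext j
  by_cases hj : j = i
  · subst hj
    simp [flipCoord]
  · simp [flipCoord, hj]

theorem IsAffineRelation.flipDirections_subset {R : Set (ι → Bool)} (hR : IsAffineRelation R)
    {a b : ι → Bool} (ha : a ∈ R) (hb : b ∈ R) : flipDirections R a ⊆ flipDirections R b := by
  intro i hi
  have hmem := hR a ha _ hi b hb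
  rwa [xor_flipCoord_xor] at hmem

end Flip

section SolutionGraph

variable {ι : Type*} [Fintype ι] [DecidableEq ι]

theorem hammingDist_eq_one_iff_s7 {a b : ι → Bool} :
    hammingDist a b = 1 ↔ ∃ i, b = flipCoord a i := by
  simp only [hammingDist, Finset.card_eq_one, Finset.ext_iff, Finset.mem_filter_univ,
    Finset.mem_singleton, eq_flipCoord_iff]

theorem stepR_iff {R : Set (ι → Bool)} {a b : ι → Bool} :
    stepR R a b ↔ a ∈ R ∧ ∃ i ∈ flipDirections R a, b = flipCoord a i := by
  rw [stepR, hammingDist_eq_one_iff_s7]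
  constructor
  · rintro ⟨ha, hb, i, rfl⟩
    exact ⟨ha, i, hb, rfl⟩
  · rintro ⟨ha, i, hi, rfl⟩
    exact ⟨ha, hi, i, rfl⟩

/-- The connected component of `a` in the solution graph of `R`. Membership in `R` is required
separately because `connIn` is reflexive also at vectors outside `R`. -/
def solutionComponent (R : Set (ι → Bool)) (a : ι → Bool) : Set (ι → Bool) :=
  {b | b ∈ R ∧ connIn R a b}

theorem flipCoord_mem_solutionComponent {R : Set (ι → Bool)} {a b : ι → Bool} {i : ι}
    (hb : b ∈ solutionComponent R a) (hi : i ∈ flipDirections R b) :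
    flipCoord b i ∈ solutionComponent R a :=
  ⟨hi, hb.2.tail (stepR_iff.2 ⟨hb.1, i, hi, rfl⟩)⟩

namespace IsAffineRelation

variable {R : Set (ι → Bool)} {a : ι → Bool}

theorem solutionComponent_subset_subcube (hR : IsAffineRelation R) (ha : a ∈ R) :
    solutionComponent R a ⊆ subcube a (flipDirections R a) := by
  rintro b ⟨-, hab⟩
  induction hab with
  | refl => exact fun _ _ => rfl
  | tail _ hstep ih =>
    obtain ⟨hc, i, hi, rfl⟩ := stepR_iff.1 hstep
    exact flipCoord_mem_subcube ih (hR.flipDirections_subset hc ha hi)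

theorem piecewise_mem_solutionComponent (hR : IsAffineRelation R) (ha : a ∈ R) {b : ι → Bool}
    (hb : b ∈ subcube a (flipDirections R a)) (s : Finset ι) :
    s.piecewise b a ∈ solutionComponent R a := by
  induction s using Finset.induction_on with
  | empty =>
    rw [Finset.piecewise_empty]
    exact ⟨ha, Relation.ReflTransGen.refl⟩
  | insert j s hjs ih =>
    have hj : s.piecewise b a j = a j := Finset.piecewise_eq_of_notMem s b a hjs
    rw [Finset.piecewise_insert]
    by_cases hbj : b j = a j
    · rwa [hbj, ← hj, Function.update_eq_self]
    · have hjD : j ∈ flipDirections R a := not_imp_comm.1 (hb j) hbj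
      rw [Bool.eq_not.2 hbj, ← hj]
      exact flipCoord_mem_solutionComponent ih (hR.flipDirections_subset ha ih.1 hjD)

theorem solutionComponent_eq_subcube (hR : IsAffineRelation R) (ha : a ∈ R) :
    solutionComponent R a = subcube a (flipDirections R a) := by
  refine (hR.solutionComponent_subset_subcube ha).antisymm fun b hb => ?_
  simpa only [Finset.piecewise_univ] using
    hR.piecewise_mem_solutionComponent ha hb Finset.univ

theorem apply_mem_solutionComponent (hR : IsAffineRelation R) (ha : a ∈ R)
    {f : Bool → Bool → Bool → Bool} (hf : ∀ x, f x x x = x) {b c d : ι → Bool}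
    (hb : b ∈ solutionComponent R a) (hc : c ∈ solutionComponent R a)
    (hd : d ∈ solutionComponent R a) :
    (fun i => f (b i) (c i) (d i)) ∈ solutionComponent R a := by
  rw [hR.solutionComponent_eq_subcube ha] at hb hc hd ⊢
  exact apply_mem_subcube hf hb hc hd

end IsAffineRelation

theorem stmt7_general (R : Set (ι → Bool)) (hR : IsAffineRelation R) (a : ι → Bool) (ha : a ∈ R)
    (f : Bool → Bool → Bool → Bool) (hf : ∀ x, f x x x = x) :
    ({b | b ∈ R ∧ connIn R a b} =
        {b | ∀ i, Function.update a i (!a i) ∉ R → b i = a i}) ∧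
      (∀ b c d, b ∈ R → c ∈ R → d ∈ R →
        connIn R a b → connIn R a c → connIn R a d →
          (fun i => f (b i) (c i) (d i)) ∈ R ∧
            connIn R a (fun i => f (b i) (c i) (d i))) :=
  ⟨hR.solutionComponent_eq_subcube ha, fun _ _ _ hb hc hd hab hac had =>
    hR.apply_mem_solutionComponent ha hf ⟨hb, hab⟩ ⟨hc, hac⟩ ⟨hd, had⟩⟩

end SolutionGraph

/-- For `R` closed under coordinatewise `x ⊕ y ⊕ z` (an affine relation) and
`a ∈ R`, the connected component of `a` in `G(R)` is exactly the subcube of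
vectors agreeing with `a` outside `D = {i | a with coordinate i flipped ∈ R}`.
In particular the component is closed under coordinatewise majority. -/
theorem stmt7 {n : ℕ} (R : Set (Fin n → Bool))
    (hxor : ∀ a ∈ R, ∀ b ∈ R, ∀ c ∈ R,
      (fun i => xor (xor (a i) (b i)) (c i)) ∈ R)
    (a : Fin n → Bool) (ha : a ∈ R) :
    ({b | b ∈ R ∧ connIn R a b} =
        {b | ∀ i, Function.update a i (!a i) ∉ R → b i = a i}) ∧
      (∀ b c d, b ∈ R → c ∈ R → d ∈ R →
        connIn R a b → connIn R a c → connIn R a d →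
          (fun i => maj (b i) (c i) (d i)) ∈ R ∧
            connIn R a (fun i => maj (b i) (c i) (d i))) :=
  stmt7_general R hxor a ha maj maj_self
end

section
/- Let R ⊆ {0,1}^n be nonempty, closed under coordinatewise conjunction ∧ (R is Horn), and not 1-valid (the all-one vector is not in R). Then either the all-zero vector belongs to R (so that identifying all variables of R yields the unary relation {0}), or there exists a ∈ {0,1}^n such that {(x,y) ∈ {0,1}² | the vector whose i-th coordinate is y if a_i = 1 and x if a_i = 0 belongs to R} = {(0,1)} (so that the binary relation {01} is obtained from R by identification and permutation of variables). -/
/-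
For any `a ∈ R`, the four pairs `00`, `01`, `10`, `11` substituted along `a` give the vectors
`⊥`, `a`, `aᶜ`, `⊤`. If `⊥` is not in the `⊓`-closed set `R`, then neither is `aᶜ`, because
`a ⊓ aᶜ = ⊥`.
-/

theorem bot_mem_of_infClosed_of_disjoint {α : Type*} [SemilatticeInf α] [OrderBot α] {s : Set α}
    {a b : α} (hs : InfClosed s) (ha : a ∈ s) (hb : b ∈ s) (hab : Disjoint a b) : ⊥ ∈ s :=
  hab.eq_bot ▸ hs ha hb

section BinaryMinor

variable {ι α : Type*}

/-- The binary relation obtained from the relation `R` by identifying variables along `a`: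
the coordinates where `a` is `false` become the first variable, the others the second. -/
def binaryMinor (R : Set (ι → α)) (a : ι → Bool) : Set (α × α) :=
  {p | (fun i => if a i then p.2 else p.1) ∈ R}

theorem diag_mem_binaryMinor {R : Set (ι → α)} {a : ι → Bool} {x : α} :
    (x, x) ∈ binaryMinor R a ↔ Function.const ι x ∈ R := by
  simp only [binaryMinor, Set.mem_ofPred_eq, ite_self, Function.const_def]

variable {R : Set (ι → Bool)} {a : ι → Bool}

theorem false_true_mem_binaryMinor : (false, true) ∈ binaryMinor R a ↔ a ∈ R := by
  simp only [binaryMinor, Set.mem_ofPred_eq, Bool.if_true_left, Bool.or_false, Bool.decide_eq_true]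

theorem true_false_mem_binaryMinor : (true, false) ∈ binaryMinor R a ↔ aᶜ ∈ R := by
  have hcompl : (fun i => if a i then false else true) = aᶜ := by
    ext i
    cases h : a i <;> simp [h]
  simp only [binaryMinor, Set.mem_ofPred_eq, hcompl]

theorem binaryMinor_eq_singleton_false_true (hR : InfClosed R) (ha : a ∈ R) (hbot : ⊥ ∉ R)
    (htop : ⊤ ∉ R) : binaryMinor R a = {(false, true)} := by
  have hac : aᶜ ∉ R := fun h =>
    hbot (bot_mem_of_infClosed_of_disjoint hR ha h disjoint_compl_right)
  ext ⟨x, y⟩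
  cases x <;> cases y
  · exact iff_of_false (mt diag_mem_binaryMinor.mp hbot) (by simp)
  · exact iff_of_true (false_true_mem_binaryMinor.mpr ha) rfl
  · exact iff_of_false (mt true_false_mem_binaryMinor.mp hac) (by simp)
  · exact iff_of_false (mt diag_mem_binaryMinor.mp htop) (by simp)

end BinaryMinor

theorem stmt16_general {ι : Type*} {R : Set (ι → Bool)} (hne : R.Nonempty) (hR : InfClosed R)
    (htop : ⊤ ∉ R) :
    ⊥ ∈ R ∨ ∃ a : ι → Bool, ∀ x y : Bool,
      ((fun i => if a i then y else x) ∈ R ↔ (x = false ∧ y = true)) := by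
  refine or_iff_not_imp_left.mpr fun hbot => ?_
  obtain ⟨a, ha⟩ := hne
  have hminor := binaryMinor_eq_singleton_false_true hR ha hbot htop
  exact ⟨a, fun x y => (Set.ext_iff.mp hminor (x, y)).trans Prod.mk_inj⟩

/-- If `R ⊆ {0,1}^n` is nonempty, Horn (closed under coordinatewise
conjunction) and not 1-valid, then either the all-zero vector is in `R` (so
identifying all variables yields the unary relation `{0}`), or for some
`a ∈ {0,1}^n`, substituting one variable for the coordinates where `a` is `0`
and another for those where `a` is `1` yields the binary relation `{01}`. -/
theorem stmt16 {n : ℕ} (R : Set (Fin n → Bool)) (hne : R.Nonempty)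
    (hand : ∀ a ∈ R, ∀ b ∈ R, (fun i => a i && b i) ∈ R)
    (h1 : (fun _ => true) ∉ R) :
    (fun _ => false) ∈ R ∨
      ∃ a : Fin n → Bool, ∀ x y : Bool,
        ((fun i => if a i then y else x) ∈ R ↔ (x = false ∧ y = true)) :=
  stmt16_general hne (fun a ha b hb => hand a ha b hb) h1
end

section
/- Let F ⊆ {0,1}^n be defined by a constraint family ((V_j, Q_j))_{j∈J} in which every constraint relation Q_j is closed under the coordinatewise application of maj (each Q_j is bijunctive). Then for any two distinct connected components A and B of the solution graph G(F), there exists j ∈ J such that the images of A and B under restriction to V_j are disconnected in the solution graph of the projection π_j(F) = {a|_{V_j} : a ∈ F}: no element of {a|_{V_j} : a ∈ A} is connected to an element of {b|_{V_j} : b ∈ B} in G(π_j(F)). -/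
/-- The projection of the defined relation to the scope of the `j`-th
constraint. -/
def projSet {n : ℕ} {J : Type*} (V : J → Finset (Fin n))
    (Q : ∀ j, Set ({i // i ∈ V j} → Bool)) (j : J) :
    Set ({i // i ∈ V j} → Bool) :=
  {x | ∃ c ∈ famSet V Q, x = fun i : {i // i ∈ V j} => c i.1}

/-!
Let `a₀` be a vector in the component of `a` at minimal Hamming distance from `b`. Flipping a
coordinate `i` on which `a₀` and `b` differ never yields a solution, so some constraint forbids the
flip. By the Baker–Pixley theorem (`IsBijunctive.exists_eqOn_of_forall_card_le_two`) the obstruction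
lives on `i` and one more coordinate `k` of the scope of that constraint: every solution satisfies
`x i = b i → x k = b k`, while `a₀ k ≠ b k`. If, among the coordinates on which `a₀` and `b` differ,
`i` maximises the number of solutions agreeing with `b` at `i`, then this implication is an
equivalence. So changing `x i` forces changing `x k`, and no path, even in the projection, can do
either; but the two components disagree at `i`.
-/

open Function

section Bijunctive

variable {ι : Type*}

theorem maj_self_left_s17 (p q : Bool) : maj p p q = p := by
  revert p q; decide

theorem maj_self_right_s17 (p q : Bool) : maj q p p = p := by
  revert p q; decide

theorem maj_self_outer (p q : Bool) : maj p q p = p := by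
  revert p q; decide

/-- A Boolean relation is bijunctive if it is closed under coordinatewise majority. -/
def IsBijunctive (R : Set (ι → Bool)) : Prop :=
  ∀ x ∈ R, ∀ y ∈ R, ∀ z ∈ R, (fun i => maj (x i) (y i) (z i)) ∈ R

theorem IsBijunctive.exists_eqOn_of_erase [DecidableEq ι] {R : Set (ι → Bool)}
    (hR : IsBijunctive R) {x : ι → Bool} {s : Finset ι} {p q r : ι}
    (hpq : p ≠ q) (hpr : p ≠ r) (hqr : q ≠ r)
    (hp : ∃ y ∈ R, Set.EqOn y x (s.erase p)) (hq : ∃ y ∈ R, Set.EqOn y x (s.erase q))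
    (hr : ∃ y ∈ R, Set.EqOn y x (s.erase r)) :
    ∃ y ∈ R, Set.EqOn y x s := by
  obtain ⟨y, hy, hyx⟩ := hp
  obtain ⟨z, hz, hzx⟩ := hq
  obtain ⟨w, hw, hwx⟩ := hr
  refine ⟨_, hR y hy z hz w hw, fun u hu => ?_⟩
  have hyu (h : u ≠ p) : y u = x u := hyx (Finset.mem_erase.2 ⟨h, hu⟩)
  have hzu (h : u ≠ q) : z u = x u := hzx (Finset.mem_erase.2 ⟨h, hu⟩)
  have hwu (h : u ≠ r) : w u = x u := hwx (Finset.mem_erase.2 ⟨h, hu⟩)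
  obtain rfl | hup := eq_or_ne u p
  · simp only [hzu hpq, hwu hpr, maj_self_right_s17]
  obtain rfl | huq := eq_or_ne u q
  · simp only [hyu hup, hwu hqr, maj_self_outer]
  · simp only [hyu hup, hzu huq, maj_self_left_s17]

theorem IsBijunctive.exists_eqOn_of_forall_card_le_two {R : Set (ι → Bool)}
    (hR : IsBijunctive R) {x : ι → Bool} (s : Finset ι)
    (h : ∀ t ⊆ s, t.card ≤ 2 → ∃ y ∈ R, Set.EqOn y x t) :
    ∃ y ∈ R, Set.EqOn y x s := by
  classical
  induction s using Finset.strongInduction with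
  | H s ih =>
    by_cases hs : s.card ≤ 2
    · exact h s subset_rfl hs
    obtain ⟨p, q, r, hp, hq, hr, hpq, hpr, hqr⟩ := Finset.two_lt_card_iff.1 (not_le.1 hs)
    have erase {u : ι} (hu : u ∈ s) : ∃ y ∈ R, Set.EqOn y x (s.erase u) :=
      ih _ (Finset.erase_ssubset hu) fun t ht => h t (ht.trans (Finset.erase_subset u s))
    exact hR.exists_eqOn_of_erase hpq hpr hqr (erase hp) (erase hq) (erase hr)

end Bijunctive

section SolutionGraph

variable {ι : Type*} [Fintype ι] [DecidableEq ι]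

theorem hammingDist_update_self {β : ι → Type*} [∀ i, DecidableEq (β i)] {x : ∀ i, β i} {i : ι}
    {c : β i} (h : x i ≠ c) : hammingDist x (update x i c) = 1 := by
  refine Finset.card_eq_one.2 ⟨i, Finset.ext fun k => ?_⟩
  obtain rfl | hk := eq_or_ne k i <;> simp [*]

theorem hammingDist_update_lt {β : ι → Type*} [∀ i, DecidableEq (β i)] {x y : ∀ i, β i} {i : ι}
    (h : x i ≠ y i) : hammingDist (update x i (y i)) y < hammingDist x y := by
  refine Finset.card_lt_card ((Finset.ssubset_iff_of_subset fun k hk => ?_).2 ⟨i, ?_⟩)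
  · obtain rfl | hki := eq_or_ne k i <;> simp_all
  · simp [h]

variable {R : Set (ι → Bool)} {a b : ι → Bool} {i k : ι}

theorem mem_of_connIn (ha : a ∈ R) (hab : connIn R a b) : b ∈ R := by
  cases hab with
  | refl => exact ha
  | tail _ hstep => exact hstep.2.1

theorem exists_connIn_forall_update_notMem (ha : a ∈ R) (b : ι → Bool) :
    ∃ a₀, connIn R a a₀ ∧ ∀ i, a₀ i ≠ b i → update a₀ i (b i) ∉ R := by
  obtain ⟨a₀, ha₀, hmin⟩ := Set.exists_min_image {x | connIn R a x} (hammingDist · b)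
    (Set.toFinite _) ⟨a, .refl⟩
  refine ⟨a₀, ha₀, fun i hi hmem => ?_⟩
  have hstep : stepR R a₀ (update a₀ i (b i)) :=
    ⟨mem_of_connIn ha ha₀, hmem, hammingDist_update_self hi⟩
  exact (hmin _ (ha₀.tail hstep)).not_gt (hammingDist_update_lt hi)

end SolutionGraph

section Tied

variable {ι : Type*} {R : Set (ι → Bool)} {i k : ι}

/-- Coordinates `i` and `k` are tied on `R` if two vectors of `R` agree at `i` exactly when they
agree at `k`; equivalently, `R` satisfies `x i = x k` or it satisfies `x i ≠ x k`. -/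
def IsTied (R : Set (ι → Bool)) (i k : ι) : Prop :=
  ∀ x ∈ R, ∀ y ∈ R, x i = y i ↔ x k = y k

theorem IsTied.of_forall_iff {b : ι → Bool} (h : ∀ x ∈ R, x i = b i ↔ x k = b k) :
    IsTied R i k := by
  have eq_iff (p q r : Bool) : p = q ↔ (p = r ↔ q = r) := by revert p q r; decide
  intro x hx y hy
  rw [eq_iff (x i) (y i) (b i), eq_iff (x k) (y k) (b k), h x hx, h y hy]

theorem IsTied.image_restrict (h : IsTied R i k) {s : Finset ι} (hi : i ∈ s) (hk : k ∈ s) :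
    IsTied (s.restrict '' R) ⟨i, hi⟩ ⟨k, hk⟩ := by
  rintro _ ⟨x, hx, rfl⟩ _ ⟨y, hy, rfl⟩
  exact h x hx y hy

theorem IsTied.eq_of_connIn [Fintype ι] [DecidableEq ι] (h : IsTied R i k) (hik : i ≠ k)
    {x y : ι → Bool} (hxy : connIn R x y) : x i = y i := by
  induction hxy with
  | refl => rfl
  | @tail u v _ hstep ih =>
    obtain ⟨hu, hv, hdist⟩ := hstep
    refine ih.trans (by_contra fun hi => hik ?_)
    have hk : u k ≠ v k := mt (h u hu v hv).2 hi
    exact Finset.card_le_one.1 hdist.le i (by simpa using hi) k (by simpa using hk)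

theorem isTied_of_forall_imp [Finite ι] {b : ι → Bool} (himp : ∀ x ∈ R, x i = b i → x k = b k)
    (hcard : {x ∈ R | x k = b k}.ncard ≤ {x ∈ R | x i = b i}.ncard) : IsTied R i k := by
  have hsub : {x ∈ R | x i = b i} ⊆ {x ∈ R | x k = b k} := fun x hx => ⟨hx.1, himp x hx.1 hx.2⟩
  have heq := Set.eq_of_subset_of_ncard_le hsub hcard (Set.toFinite _)
  exact .of_forall_iff fun x hx => ⟨himp x hx, fun hxk => (heq.ge ⟨hx, hxk⟩).2⟩

end Tied

section Scopes

variable {ι J : Type*} {V : J → Finset ι} {R : Set (ι → Bool)} {a b : ι → Bool}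

/-- `R` is determined by its projections to the scopes `V j`: a vector that agrees on every scope
with some vector of `R` lies in `R`. These are the relations definable by a constraint family with
scopes `V`. -/
def IsDeterminedBy (V : J → Finset ι) (R : Set (ι → Bool)) : Prop :=
  ∀ x, (∀ j, ∃ y ∈ R, Set.EqOn y x (V j)) → x ∈ R

theorem exists_imp_of_update_notMem [DecidableEq ι] (hR : IsBijunctive R)
    (hV : IsDeterminedBy V R) (ha : a ∈ R) (hb : b ∈ R) {i : ι} (hi : update a i (b i) ∉ R) :
    ∃ j, i ∈ V j ∧ ∃ k ∈ V j, i ≠ k ∧ a k ≠ b k ∧ ∀ x ∈ R, x i = b i → x k = b k := by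
  obtain ⟨j, hj⟩ := not_forall.1 (mt (hV _) hi)
  obtain ⟨t, htV, htcard, ht⟩ : ∃ t ⊆ V j, t.card ≤ 2 ∧
      ¬ ∃ y ∈ R, Set.EqOn y (update a i (b i)) t := by
    contrapose! hj
    exact hR.exists_eqOn_of_forall_card_le_two (V j) hj
  have hit : i ∈ t := by
    refine by_contra fun hit => ht ⟨a, ha, fun u hu => ?_⟩
    rw [update_of_ne (ne_of_mem_of_not_mem hu hit)]
  obtain ⟨k, hkt, hik, hk⟩ : ∃ k ∈ t, i ≠ k ∧ a k ≠ b k := by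
    by_contra! hab
    refine ht ⟨b, hb, fun u hu => ?_⟩
    obtain rfl | hiu := eq_or_ne i u
    · rw [update_self]
    · rw [update_of_ne hiu.symm, hab u hu hiu]
  have htik : {i, k} = t := Finset.eq_of_subset_of_card_le
    (Finset.insert_subset hit (Finset.singleton_subset_iff.2 hkt))
    (htcard.trans_eq (Finset.card_pair hik).symm)
  refine ⟨j, htV hit, k, htV hkt, hik, hk, fun x hx hxi => ?_⟩
  have hxk : x k ≠ a k := by
    refine fun hxk => ht ⟨x, hx, ?_⟩
    simp [← htik, Set.EqOn, hxi, hxk, hik.symm]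
  exact (Bool.eq_not.2 hxk).trans (Bool.eq_not.2 hk.symm).symm

theorem exists_isTied_of_forall_update_notMem [Finite ι] [DecidableEq ι] (hR : IsBijunctive R)
    (hV : IsDeterminedBy V R) (ha : a ∈ R) (hb : b ∈ R) (hab : a ≠ b)
    (h : ∀ i, a i ≠ b i → update a i (b i) ∉ R) :
    ∃ j, ∃ i ∈ V j, ∃ k ∈ V j, i ≠ k ∧ IsTied R i k ∧ a i ≠ b i := by
  obtain ⟨i, hi, hmax⟩ := Set.exists_max_image {i | a i ≠ b i}
    (fun i => {x ∈ R | x i = b i}.ncard) (Set.toFinite _) (ne_iff.1 hab)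
  obtain ⟨j, hij, k, hkj, hik, hk, himp⟩ := exists_imp_of_update_notMem hR hV ha hb (h i hi)
  exact ⟨j, i, hij, k, hkj, hik, isTied_of_forall_imp himp (hmax k hk), hi⟩

theorem stmt17_general [Fintype ι] [DecidableEq ι] (hR : IsBijunctive R)
    (hV : IsDeterminedBy V R) (ha : a ∈ R) (hb : b ∈ R) (hdisc : ¬ connIn R a b) :
    ∃ j, ∀ a' b', connIn R a a' → connIn R b b' →
      ¬ connIn ((V j).restrict '' R) ((V j).restrict a') ((V j).restrict b') := by
  obtain ⟨a₀, ha₀, hstuck⟩ := exists_connIn_forall_update_notMem ha b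
  obtain ⟨j, i, hi, k, hk, hik, htied, hne⟩ := exists_isTied_of_forall_update_notMem hR hV
    (mem_of_connIn ha ha₀) hb (fun h => hdisc (h ▸ ha₀)) hstuck
  refine ⟨j, fun a' b' ha' hb' hconn => hne ?_⟩
  calc
    a₀ i = a i := (htied.eq_of_connIn hik ha₀).symm
    _ = a' i := htied.eq_of_connIn hik ha'
    _ = b' i := (htied.image_restrict hi hk).eq_of_connIn (Subtype.coe_ne_coe.1 hik) hconn
    _ = b i := (htied.eq_of_connIn hik hb').symm

end Scopes

section ConstraintFamily

variable {n : ℕ} {J : Type*} {V : J → Finset (Fin n)} {Q : ∀ j, Set ({i // i ∈ V j} → Bool)}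

theorem isBijunctive_famSet (hQ : ∀ j, IsBijunctive (Q j)) : IsBijunctive (famSet V Q) :=
  fun _ hx _ hy _ hz j => hQ j _ (hx j) _ (hy j) _ (hz j)

theorem isDeterminedBy_famSet : IsDeterminedBy V (famSet V Q) := by
  intro x hx j
  obtain ⟨y, hy, hyx⟩ := hx j
  have hrestrict : (V j).restrict y = (V j).restrict x := funext fun i => hyx i.2
  change (V j).restrict x ∈ Q j
  exact hrestrict ▸ hy j

theorem projSet_eq_image_restrict (j : J) : projSet V Q j = (V j).restrict '' famSet V Q :=
  Set.ext fun _ => exists_congr fun _ => and_congr_right fun _ => eq_comm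

end ConstraintFamily

/-- If every constraint relation is bijunctive (closed under coordinatewise
majority), then for any two distinct connected components `A`, `B` of the
solution graph of the defined relation (given by representatives `a`, `b`),
there is a constraint whose projection disconnects them: no restriction of an
element of `A` is connected to a restriction of an element of `B` in the
solution graph of the projection. -/
theorem stmt17 {n : ℕ} {J : Type*} [Fintype J]
    (V : J → Finset (Fin n)) (Q : ∀ j, Set ({i // i ∈ V j} → Bool))
    (hQ : ∀ j, ∀ a ∈ Q j, ∀ b ∈ Q j, ∀ c ∈ Q j,
      (fun i => maj (a i) (b i) (c i)) ∈ Q j)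
    (a b : Fin n → Bool) (ha : a ∈ famSet V Q) (hb : b ∈ famSet V Q)
    (hdisc : ¬ connIn (famSet V Q) a b) :
    ∃ j, ∀ a' b', a' ∈ famSet V Q → connIn (famSet V Q) a a' →
      b' ∈ famSet V Q → connIn (famSet V Q) b b' →
      ¬ connIn (projSet V Q j)
          (fun i : {i // i ∈ V j} => a' i.1)
          (fun i : {i // i ∈ V j} => b' i.1) := by
  obtain ⟨j, hj⟩ := stmt17_general (isBijunctive_famSet hQ) isDeterminedBy_famSet ha hb hdisc
  exact ⟨j, fun a' b' _ ha' _ hb' => projSet_eq_image_restrict (Q := Q) j ▸ hj a' b' ha' hb'⟩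
end

section
/- Let R ⊆ {0,1}^n be a relation that is not safely OR-free: there is an assignment σ mapping each of the n coordinates to one of two variable symbols u, v or to one of the constants 0, 1 such that {(u,v) ∈ {0,1}² | the vector whose i-th coordinate is the value of σ(i) under the assignment (u,v) belongs to R} = {(0,1),(1,0),(1,1)}. Then there exist m ≥ 1 and finitely many maps τ₁, …, τ_r from {1,…,n} to {1,…,m} such that the relation S = {a ∈ {0,1}^m | a ∘ τ_t ∈ R for all t = 1,…,r} (the solution set of a CNF({R})-formula over m variables, without constants) is 1-isolating: S contains an element b ≠ (0,…,0) that is isolated in the solution graph G(S), i.e. no element of S is at Hamming distance 1 from b. -/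
/-!
Only one consequence of the hypothesis matters: `R` is not a lower set, because every relation
obtained from a lower set by identifying variables and substituting constants is again a lower
set, and OR is not. So there are `p ≤ q` with `p ∉ R` and `q ∈ R`. Three variables with values
`0, 0, 1` or `0, 1, 1` spell out `p` or `q`, so a constraint `R(…)` can forbid lowering the middle
variable from `1` to `0`, as long as `b` has another `1` and some `0` to serve as constants. If `R`
is not an upper set either, the dual constraint forbids raising a `0` to `1`, and `b = 0011` is
isolated once each of its four coordinates is pinned in this way. If `R` is an upper set, then
`q` may be taken to be `1…1`; no variable with value `0` is needed, and `b = 11` works.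
-/

variable {ι κ T : Type*}

/-- `R` is safely OR-free: OR cannot be obtained from `R` by identification of variables and
substitution of constants. The two variable symbols are encoded by the two projections of
`Bool × Bool`, and the constants by the constant functions. -/
def IsSafelyOrFree (R : Set (ι → Bool)) : Prop :=
  ¬ ∃ σ : ι → (Bool × Bool → Bool),
    (∀ i, σ i = Prod.fst ∨ σ i = Prod.snd ∨
      σ i = (fun _ => false) ∨ σ i = (fun _ => true)) ∧
    (∀ u v : Bool, ((fun i => σ i (u, v)) ∈ R ↔ (u || v) = true))

/-- The solution set of the `CNF({R})`-formula with one constraint `R(x_{τ t i} | i)` for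
each `t`. -/
def cnfSolutions (R : Set (ι → Bool)) (τ : T → ι → κ) : Set (κ → Bool) :=
  {a | ∀ t, (fun i => a (τ t i)) ∈ R}

/-- `S` is 1-isolating: some nonzero element of `S` is isolated in the solution graph `G(S)`. -/
def IsOneIsolating [Fintype κ] (S : Set (κ → Bool)) : Prop :=
  ∃ b ∈ S, b ≠ (fun _ => false) ∧ ∀ c ∈ S, hammingDist b c ≠ 1

/-- A single constraint on `R` pins the coordinate `k` of `b`: it is satisfied by `b`, but violated
by the neighbour of `b` obtained by flipping `k`. -/
def IsPinned [DecidableEq κ] (R : Set (ι → Bool)) (b : κ → Bool) (k : κ) : Prop :=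
  ∃ τ : ι → κ, b ∘ τ ∈ R ∧ Function.update b k (!b k) ∘ τ ∉ R

/-- For `p ≤ q`, the substitution of variables that separates the coordinates according to the
values of `(p, q)`: `x` where they are `(0, 0)`, `y` where they are `(0, 1)`, `z` where they are
`(1, 1)`. Setting `x = 0` and `z = 1` leaves `p` and `q` as the two instances `y = 0`, `y = 1`. -/
def chainSubst (p q : ι → Bool) (x y z : κ) (i : ι) : κ :=
  if p i then z else if q i then y else x

theorem isSafelyOrFree_of_isLowerSet {R : Set (ι → Bool)} (hR : IsLowerSet R) :
    IsSafelyOrFree R := by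
  rintro ⟨σ, hσ, hor⟩
  have hmono : ∀ i, Monotone (σ i) := by
    intro i
    rcases hσ i with h | h | h | h <;> rw [h]
    exacts [monotone_fst, monotone_snd, monotone_const, monotone_const]
  have h10 : (fun i => σ i (true, false)) ∈ R := (hor true false).2 rfl
  have h00 : (fun i => σ i (false, false)) ∈ R :=
    hR (fun i => hmono i (Prod.mk_le_mk.2 ⟨Bool.false_le _, le_rfl⟩)) h10
  exact Bool.false_ne_true ((hor false false).1 h00)

theorem exists_eq_update_not_of_hammingDist_eq_one [Fintype κ] [DecidableEq κ] {b c : κ → Bool}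
    (h : hammingDist b c = 1) : ∃ k, c = Function.update b k (!b k) := by
  obtain ⟨k, hk⟩ := Finset.card_eq_one.1 h
  have hdiff : ∀ j, b j ≠ c j ↔ j = k := fun j => by
    simpa only [Finset.mem_filter_univ, Finset.mem_singleton] using Finset.ext_iff.1 hk j
  refine ⟨k, Function.eq_update_iff.2 ⟨?_, fun j hj => ?_⟩⟩
  · exact Bool.eq_not.2 ((hdiff k).2 rfl).symm
  · exact (not_ne_iff.1 (mt (hdiff j).1 hj)).symm

theorem exists_isOneIsolating_cnfSolutions [Fintype κ] [DecidableEq κ] {R : Set (ι → Bool)}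
    {b : κ → Bool} (hb : b ≠ fun _ => false) (hpin : ∀ k, IsPinned R b k) :
    ∃ τ : κ → ι → κ, IsOneIsolating (cnfSolutions R τ) := by
  choose τ hmem hflip using hpin
  refine ⟨τ, b, hmem, hb, fun c hc hdist => ?_⟩
  obtain ⟨k, rfl⟩ := exists_eq_update_not_of_hammingDist_eq_one hdist
  exact hflip k (hc k)

section chainSubst

variable {p q : ι → Bool} {a : κ → Bool} {x y z : κ}

theorem comp_chainSubst_eq_left (hx : a x = false) (hy : a y = false) (hz : a z = true) :
    a ∘ chainSubst p q x y z = p := by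
  funext i
  cases hp : p i <;> cases hq : q i <;> simp [chainSubst, *]

theorem comp_chainSubst_eq_right (hpq : p ≤ q) (hx : a x = false) (hy : a y = true)
    (hz : a z = true) : a ∘ chainSubst p q x y z = q := by
  funext i
  have hi : p i = true → q i = true := hpq i
  cases hp : p i <;> cases hq : q i <;> simp_all [chainSubst]

end chainSubst

section IsPinned

variable [DecidableEq κ] {R : Set (ι → Bool)} {b : κ → Bool} {x y z : κ}

theorem isPinned_of_not_isLowerSet (hR : ¬ IsLowerSet R) (hx : b x = false) (hy : b y = true)
    (hz : b z = true) (hzy : z ≠ y) : IsPinned R b y := by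
  simp only [IsLowerSet, not_forall] at hR
  obtain ⟨q, p, hpq, hq, hp⟩ := hR
  have hxy : x ≠ y := by rintro rfl; simp [hx] at hy
  refine ⟨chainSubst p q x y z, ?_, ?_⟩
  · rwa [comp_chainSubst_eq_right hpq hx hy hz]
  · rwa [comp_chainSubst_eq_left] <;> simp [*]

theorem isPinned_of_not_isUpperSet (hR : ¬ IsUpperSet R) (hx : b x = false) (hy : b y = false)
    (hz : b z = true) (hxy : x ≠ y) : IsPinned R b y := by
  simp only [IsUpperSet, not_forall] at hR
  obtain ⟨p, q, hpq, hp, hq⟩ := hR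
  have hzy : z ≠ y := by rintro rfl; simp [hy] at hz
  refine ⟨chainSubst p q x y z, ?_, ?_⟩
  · rwa [comp_chainSubst_eq_left hx hy hz]
  · rwa [comp_chainSubst_eq_right hpq] <;> simp [*]

theorem isPinned_top (htop : ⊤ ∈ R) (hR : R ≠ Set.univ) (hzy : z ≠ y) :
    IsPinned R (⊤ : κ → Bool) y := by
  obtain ⟨p, hp⟩ := (Set.ne_univ_iff_exists_notMem R).1 hR
  -- No coordinate has the values `(0, 0)` in `(p, ⊤)`, so the first variable is a dummy.
  refine ⟨chainSubst p ⊤ y y z, htop, ?_⟩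
  rwa [comp_chainSubst_eq_left] <;> simp [*]

end IsPinned

theorem stmt19_general (R : Set (ι → Bool)) (hR : ¬ IsLowerSet R) :
    ∃ (m r : ℕ) (τ : Fin r → ι → Fin m), 1 ≤ m ∧ 1 ≤ r ∧
      IsOneIsolating (cnfSolutions R τ) := by
  by_cases hup : IsUpperSet R
  · have hne : R.Nonempty := Set.nonempty_iff_ne_empty.2 fun h => hR (h ▸ isLowerSet_empty)
    have hpin : ∀ k : Fin 2, IsPinned R ⊤ k := fun k =>
      isPinned_top (hup.top_mem.2 hne) (fun h => hR (h ▸ isLowerSet_univ)) (z := k + 1)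
        (by fin_cases k <;> decide)
    obtain ⟨τ, hτ⟩ := exists_isOneIsolating_cnfSolutions top_ne_bot hpin
    exact ⟨2, 2, τ, one_le_two, one_le_two, hτ⟩
  · have hpin : ∀ k : Fin 4, IsPinned R ![false, false, true, true] k := by
      intro k
      fin_cases k
      · exact isPinned_of_not_isUpperSet hup (x := 1) (z := 2) rfl rfl rfl (by decide)
      · exact isPinned_of_not_isUpperSet hup (x := 0) (z := 2) rfl rfl rfl (by decide)
      · exact isPinned_of_not_isLowerSet hR (x := 0) (z := 3) rfl rfl rfl (by decide)
      · exact isPinned_of_not_isLowerSet hR (x := 0) (z := 2) rfl rfl rfl (by decide)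
    obtain ⟨τ, hτ⟩ := exists_isOneIsolating_cnfSolutions (by decide) hpin
    exact ⟨4, 4, τ, by norm_num, by norm_num, hτ⟩

/-- If `R ⊆ {0,1}^n` is not safely OR-free (the binary relation
OR = {01, 10, 11} can be obtained from `R` by identification of variables and
substitution of constants, witnessed by an assignment `σ` sending each
coordinate to one of two variable symbols or a constant), then there is a
CNF({R})-formula without constants — a conjunction of constraints
`R(x_{τ t 1}, …, x_{τ t n})` over `m` variables — whose solution set `S` is
1-isolating: it contains a solution `b ≠ (0,…,0)` isolated in `G(S)`. -/
theorem stmt19 {n : ℕ} (R : Set (Fin n → Bool))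
    (hnsof : ∃ σ : Fin n → (Bool × Bool → Bool),
      (∀ i, σ i = Prod.fst ∨ σ i = Prod.snd ∨
        σ i = (fun _ => false) ∨ σ i = (fun _ => true)) ∧
      (∀ u v : Bool, ((fun i => σ i (u, v)) ∈ R ↔ (u || v) = true))) :
    ∃ (m r : ℕ) (τ : Fin r → (Fin n → Fin m)), 1 ≤ m ∧ 1 ≤ r ∧
      ∃ b ∈ {a : Fin m → Bool | ∀ t, (fun i => a (τ t i)) ∈ R},
        b ≠ (fun _ => false) ∧
        ∀ c ∈ {a : Fin m → Bool | ∀ t, (fun i => a (τ t i)) ∈ R},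
          hammingDist b c ≠ 1 :=
  stmt19_general R fun hR => isSafelyOrFree_of_isLowerSet hR hnsof
end
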